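/- arXiv:1606.00272 — 2 statements merged into one kernel-verified Lean document; each statement's English description precedes it below -/
import Mathlib

section
/- Let R be a commutative ring, I an ideal of R, and n ≥ 4. Let φ : St*(n,R,I) → GL(n,R) be the natural homomorphism sending F(u,v) ↦ t(u,v) and S(u,v) ↦ t(u,v). Then for every g ∈ St*(n,R,I) and every generator F(u,v), one has g·F(u,v)·g⁻¹ = F(φ(g)·u, (φ(g)⁻¹)ᵗ·v). -/
/-- The set of elementary transvections inside `GL n R`. -/
def transvectionSet (n : ℕ) (R : Type) [CommRing R] :
    Set (Matrix.GeneralLinearGroup (Fin n) R) :=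
  {M | ∃ (i j : Fin n) (_ : i ≠ j) (r : R),
    (M : Matrix (Fin n) (Fin n) R) = 1 + Matrix.single i j r}

/-- The elementary subgroup `E(n, R) ≤ GL(n, R)`. -/
def Elem (n : ℕ) (R : Type) [CommRing R] : Subgroup (Matrix.GeneralLinearGroup (Fin n) R) :=
  Subgroup.closure (transvectionSet n R)

/-- The set `E(n,R)e₁` of first columns of elementary matrices. -/
def Ecol (n : ℕ) (R : Type) [CommRing R] [NeZero n] : Set (Fin n → R) :=
  {u | ∃ M ∈ Elem n R, u = fun i => (M : Matrix (Fin n) (Fin n) R) i 0}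

/-- The matrix `t(u, v) = 1 + u·vᵗ`. -/
def tMat {n : ℕ} {R : Type} [CommRing R] (u v : Fin n → R) : Matrix (Fin n) (Fin n) R :=
  1 + Matrix.vecMulVec u v

/-- The `k`-th column of an invertible matrix. -/
def colM {n : ℕ} {R : Type} [CommRing R] (M : Matrix.GeneralLinearGroup (Fin n) R)
    (k : Fin n) : Fin n → R :=
  fun i => (M : Matrix (Fin n) (Fin n) R) i k

/-- The `k`-th column of the contragredient matrix `M* = (Mᵗ)⁻¹ = (M⁻¹)ᵗ`. -/
def starCol {n : ℕ} {R : Type} [CommRing R] (M : Matrix.GeneralLinearGroup (Fin n) R)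
    (k : Fin n) : Fin n → R :=
  fun i => ((M⁻¹ : Matrix.GeneralLinearGroup (Fin n) R) : Matrix (Fin n) (Fin n) R) k i

/-- Unimodularity of the `n × 2` matrix with columns `u`, `w`: it admits a left inverse. -/
def Unimodular2 {n : ℕ} {R : Type} [CommRing R] (u w : Fin n → R) : Prop :=
  ∃ x y : Fin n → R,
    dotProduct x u = 1 ∧ dotProduct x w = 0 ∧
    dotProduct y u = 0 ∧ dotProduct y w = 1
/-- Generators `F(u,v)` and `S(u,v)` of the group `St*(n, R, I)`. -/
inductive StarGen (n : ℕ) (R : Type) [CommRing R] [NeZero n] (I : Ideal R) : Type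
  | F (u v : Fin n → R) (hu : u ∈ Ecol n R) (hv : ∀ i, v i ∈ I)
      (ho : dotProduct u v = 0) : StarGen n R I
  | S (u v : Fin n → R) (hu : ∀ i, u i ∈ I) (hv : v ∈ Ecol n R)
      (ho : dotProduct u v = 0) : StarGen n R I

/-- The relations (R1)–(R4) of the group `St*(n, R, I)`. -/
inductive StarRels (n : ℕ) (R : Type) [CommRing R] [NeZero n] (I : Ideal R) :
    FreeGroup (StarGen n R I) → Prop
  | addF (u v w : Fin n → R) (hu : u ∈ Ecol n R) (hv : ∀ i, v i ∈ I) (hw : ∀ i, w i ∈ I)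
      (hvw : ∀ i, (v + w) i ∈ I) (o1 : dotProduct u v = 0)
      (o2 : dotProduct u w = 0) (o3 : dotProduct u (v + w) = 0) :
      StarRels n R I ((FreeGroup.of (StarGen.F u v hu hv o1) : FreeGroup (StarGen n R I)) *
        FreeGroup.of (StarGen.F u w hu hw o2) * (FreeGroup.of (StarGen.F u (v + w) hu hvw o3))⁻¹)
  | addS (u w v : Fin n → R) (hu : ∀ i, u i ∈ I) (hw : ∀ i, w i ∈ I)
      (huw : ∀ i, (u + w) i ∈ I) (hv : v ∈ Ecol n R) (o1 : dotProduct u v = 0)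
      (o2 : dotProduct w v = 0) (o3 : dotProduct (u + w) v = 0) :
      StarRels n R I ((FreeGroup.of (StarGen.S u v hu hv o1) : FreeGroup (StarGen n R I)) *
        FreeGroup.of (StarGen.S w v hw hv o2) * (FreeGroup.of (StarGen.S (u + w) v huw hv o3))⁻¹)
  | conjF (u v u' v' : Fin n → R) (hu : u ∈ Ecol n R) (hv : ∀ i, v i ∈ I)
      (o1 : dotProduct u v = 0) (hu' : u' ∈ Ecol n R) (hv' : ∀ i, v' i ∈ I)
      (o2 : dotProduct u' v' = 0)
      (hu'' : Matrix.mulVec (tMat u v) u' ∈ Ecol n R)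
      (hv'' : ∀ i, Matrix.mulVec (1 - Matrix.vecMulVec v u) v' i ∈ I)
      (o3 : dotProduct (Matrix.mulVec (tMat u v) u')
        (Matrix.mulVec (1 - Matrix.vecMulVec v u) v') = 0) :
      StarRels n R I ((FreeGroup.of (StarGen.F u v hu hv o1) : FreeGroup (StarGen n R I)) *
        FreeGroup.of (StarGen.F u' v' hu' hv' o2) * (FreeGroup.of (StarGen.F u v hu hv o1))⁻¹ *
        (FreeGroup.of (StarGen.F (Matrix.mulVec (tMat u v) u')
          (Matrix.mulVec (1 - Matrix.vecMulVec v u) v') hu'' hv'' o3))⁻¹)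
  | coinc (M : Matrix.GeneralLinearGroup (Fin n) R) (hM : M ∈ Elem n R) (a : R) (ha : a ∈ I)
      (h1 : colM M 0 ∈ Ecol n R) (h2 : ∀ i, (a • starCol M 1) i ∈ I)
      (h3 : dotProduct (colM M 0) (a • starCol M 1) = 0)
      (h4 : ∀ i, (a • colM M 0) i ∈ I) (h5 : starCol M 1 ∈ Ecol n R)
      (h6 : dotProduct (a • colM M 0) (starCol M 1) = 0) :
      StarRels n R I ((FreeGroup.of (StarGen.F (colM M 0) (a • starCol M 1) h1 h2 h3) :
          FreeGroup (StarGen n R I)) *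
        (FreeGroup.of (StarGen.S (a • colM M 0) (starCol M 1) h4 h5 h6))⁻¹)

/-- The group `St*(n, R, I)`. -/
abbrev StStar (n : ℕ) (R : Type) [CommRing R] [NeZero n] (I : Ideal R) : Type :=
  PresentedGroup {w | StarRels n R I w}

/-!
The `F`'s alone generate `St*(n, R, I)`. Indeed, write `z ∈ E(n,R)e₁` as `z = M*e₂` with
`M ∈ E(n, R)` and `M* = (M⁻¹)ᵗ`. A vector `w ∈ Iⁿ` orthogonal to `z` is a combination
`w = ∑_{k ≠ 2} a_k Me_k` with `a_k ∈ I`, so `S(w,z) = ∏ S(a_k Me_k, z)` by (R2), and (R4) turns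
`S(a_k Me_k, z)` into `F(Me_k, a_k z)` once `M` is multiplied by an elementary matrix that moves
column `k` to the first place and leaves `M*e₂` alone.

The group `E(n, R)` acts on the pairs `(u, v)` indexing the `F`'s, and `t(u,v) ∈ E(n, R)` for
every such pair. Relation (R3) says that conjugation by an `F` is the action of its image under
`φ`; both sides of the claim being multiplicative in `g`, it passes to the group generated by
the `F`'s.
-/

section Vectors

open Matrix

variable {m n R : Type*} [DecidableEq m]

lemma dotProduct_mem_ideal [Fintype n] [CommRing R] {I : Ideal R} (x : n → R) {v : n → R}
    (hv : ∀ i, v i ∈ I) : x ⬝ᵥ v ∈ I :=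
  I.sum_mem fun i _ => I.mul_mem_left (x i) (hv i)

lemma single_dotProduct_single_of_ne [Fintype m] [NonAssocSemiring R] {i j : m} (hij : i ≠ j)
    (r : R) : (Pi.single i 1 : m → R) ⬝ᵥ Pi.single j r = 0 := by
  rw [single_one_dotProduct, Pi.single_eq_of_ne hij]

lemma vecMulVec_single_single [DecidableEq n] [MulZeroClass R] (i : m) (j : n) (a b : R) :
    vecMulVec (Pi.single i a) (Pi.single j b) = Matrix.single i j (a * b) := by
  ext k l
  simp only [vecMulVec_apply, Pi.single_apply, Matrix.single_apply, eq_comm (a := i),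
    eq_comm (a := j), ite_zero_mul_ite_zero]

end Vectors

section Contragredient

open Matrix

variable {n : ℕ} {R : Type} [CommRing R]

/-- The contragredient automorphism `M ↦ M* = (M⁻¹)ᵗ` of `GL(n, R)`; the `k`-th column of `M*`
is `starCol M k`. -/
def contragredient : GL (Fin n) R →* GL (Fin n) R where
  toFun M :=
    { val := (M⁻¹).1ᵀ
      inv := M.1ᵀ
      val_inv := by rw [← transpose_mul, Units.mul_inv, transpose_one]
      inv_val := by rw [← transpose_mul, Units.inv_mul, transpose_one] }
  map_one' := by ext1; simp
  map_mul' M N := by ext1; simp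

lemma colM_eq_mulVec (M : GL (Fin n) R) (k : Fin n) : colM M k = M.1 *ᵥ Pi.single k 1 :=
  (mulVec_single_one M.1 k).symm

lemma colM_contragredient (M : GL (Fin n) R) (k : Fin n) :
    colM (contragredient M) k = starCol M k :=
  rfl

lemma starCol_contragredient (M : GL (Fin n) R) (k : Fin n) :
    starCol (contragredient M) k = colM M k :=
  rfl

lemma mulVec_dotProduct_contragredient_mulVec (M : GL (Fin n) R) (u v : Fin n → R) :
    (M.1 *ᵥ u) ⬝ᵥ ((contragredient M).1 *ᵥ v) = u ⬝ᵥ v := by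
  change (M.1 *ᵥ u) ⬝ᵥ ((M⁻¹).1ᵀ *ᵥ v) = u ⬝ᵥ v
  rw [mulVec_transpose, dotProduct_comm, ← dotProduct_mulVec, mulVec_mulVec, Units.inv_mul,
    one_mulVec, dotProduct_comm]

lemma colM_dotProduct_starCol_of_ne (M : GL (Fin n) R) {i j : Fin n} (hij : i ≠ j) :
    colM M i ⬝ᵥ starCol M j = 0 := by
  rw [← colM_contragredient, colM_eq_mulVec, colM_eq_mulVec,
    mulVec_dotProduct_contragredient_mulVec, single_one_dotProduct, Pi.single_eq_of_ne hij]

lemma sum_starCol_dotProduct_smul_colM (M : GL (Fin n) R) (w : Fin n → R) :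
    ∑ k, (starCol M k ⬝ᵥ w) • colM M k = w := by
  calc ∑ k, (starCol M k ⬝ᵥ w) • colM M k = M.1 *ᵥ ((M⁻¹).1 *ᵥ w) := by
        rw [mulVec_eq_sum]
        simp only [op_smul_eq_smul]
        rfl
    _ = w := by rw [mulVec_mulVec, Units.mul_inv, one_mulVec]

end Contragredient

section Transvection

open Matrix

variable {n : ℕ} {R : Type} [CommRing R] {u v w : Fin n → R}

lemma tMat_mul_tMat (huv : u ⬝ᵥ v = 0) (w : Fin n → R) :
    tMat u v * tMat u w = tMat u (v + w) := by
  simp only [tMat, mul_add, add_mul, mul_one, one_mul, vecMulVec_mul_vecMulVec, dotProduct_comm v u,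
    huv, zero_smul, vecMulVec_zero, vecMulVec_add]
  abel

/-- The matrix `t(u, v)` as an element of `GL(n, R)`, with inverse `t(u, -v)`. -/
def tGL (u v : Fin n → R) (huv : u ⬝ᵥ v = 0) : GL (Fin n) R where
  val := tMat u v
  inv := tMat u (-v)
  val_inv := by rw [tMat_mul_tMat huv, add_neg_cancel, tMat, vecMulVec_zero, add_zero]
  inv_val := by
    rw [tMat_mul_tMat (by rw [dotProduct_neg, huv, neg_zero]), neg_add_cancel, tMat,
      vecMulVec_zero, add_zero]

lemma tGL_zero (u : Fin n → R) : tGL u 0 (dotProduct_zero u) = 1 := by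
  ext1
  simp [tGL, tMat]

lemma tGL_add (huv : u ⬝ᵥ v = 0) (huw : u ⬝ᵥ w = 0) (huvw : u ⬝ᵥ (v + w) = 0) :
    tGL u (v + w) huvw = tGL u v huv * tGL u w huw :=
  Units.ext (tMat_mul_tMat huv w).symm

lemma contragredient_tGL (huv : u ⬝ᵥ v = 0) :
    contragredient (tGL u v huv) =
      tGL v (-u) (by rw [dotProduct_neg, dotProduct_comm, huv, neg_zero]) := by
  ext1
  change (tMat u (-v))ᵀ = tMat v (-u)
  simp only [tMat, transpose_add, transpose_one, vecMulVec_neg, transpose_neg,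
    transpose_vecMulVec]

lemma mul_tGL_mul_inv (M : GL (Fin n) R) (huv : u ⬝ᵥ v = 0) :
    M * tGL u v huv * M⁻¹ =
      tGL (M.1 *ᵥ u) ((contragredient M).1 *ᵥ v)
        (by rw [mulVec_dotProduct_contragredient_mulVec, huv]) := by
  ext1
  change M.1 * (1 + vecMulVec u v) * (M⁻¹).1 = 1 + vecMulVec (M.1 *ᵥ u) ((M⁻¹).1ᵀ *ᵥ v)
  rw [mul_add, add_mul, mul_one, Units.mul_inv, mul_vecMulVec, vecMulVec_mul, mulVec_transpose]

lemma colM_mul_tGL (M : GL (Fin n) R) (huv : u ⬝ᵥ v = 0) (k : Fin n) :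
    colM (M * tGL u v huv) k = colM M k + v k • (M.1 *ᵥ u) := by
  simp only [colM_eq_mulVec, Units.val_mul, ← mulVec_mulVec, tGL, tMat, add_mulVec, one_mulVec,
    vecMulVec_mulVec, mulVec_add, dotProduct_single_one, op_smul_eq_smul, mulVec_smul]

lemma starCol_mul_tGL (M : GL (Fin n) R) (huv : u ⬝ᵥ v = 0) (k : Fin n) :
    starCol (M * tGL u v huv) k = starCol M k - u k • ((contragredient M).1 *ᵥ v) := by
  rw [← colM_contragredient, map_mul, contragredient_tGL, colM_mul_tGL, colM_contragredient,
    Pi.neg_apply, neg_smul, sub_eq_add_neg]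

end Transvection

section Elementary

open Matrix

variable {n : ℕ} {R : Type} [CommRing R]

lemma coe_tGL_single_single {i j : Fin n} (hij : i ≠ j) (r : R) :
    (tGL (Pi.single i 1) (Pi.single j r) (single_dotProduct_single_of_ne hij r)).1 =
      1 + Matrix.single i j r := by
  change 1 + vecMulVec (Pi.single i 1) (Pi.single j r) = _
  rw [vecMulVec_single_single, one_mul]

lemma tGL_single_single_mem_Elem {i j : Fin n} (hij : i ≠ j) (r : R) :
    tGL (Pi.single i 1) (Pi.single j r) (single_dotProduct_single_of_ne hij r) ∈ Elem n R :=
  Subgroup.subset_closure ⟨i, j, hij, r, coe_tGL_single_single hij r⟩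

lemma contragredient_mem_Elem {M : GL (Fin n) R} (hM : M ∈ Elem n R) :
    contragredient M ∈ Elem n R := by
  suffices Elem n R ≤ (Elem n R).comap contragredient from this hM
  refine (Subgroup.closure_le _).2 ?_
  rintro T ⟨i, j, hij, r, hT⟩
  obtain rfl : T = tGL _ _ (single_dotProduct_single_of_ne hij r) :=
    Units.ext (hT.trans (coe_tGL_single_single hij r).symm)
  refine Subgroup.subset_closure ⟨j, i, hij.symm, -r, ?_⟩
  rw [contragredient_tGL]
  change 1 + vecMulVec (Pi.single j r) (-Pi.single i 1) = _
  rw [← Pi.single_neg, vecMulVec_single_single, mul_neg, mul_one]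

lemma exists_mem_Elem_colM_eq {M : GL (Fin n) R} (hM : M ∈ Elem n R) (i j : Fin n) :
    ∃ M' ∈ Elem n R, colM M' i = colM M j ∧
      ∀ l, l ≠ i → l ≠ j → starCol M' l = starCol M l := by
  obtain rfl | hij := eq_or_ne i j
  · exact ⟨M, hM, rfl, fun _ _ _ => rfl⟩
  · -- On columns `i` and `j`: `(x, y) ↦ (x, y - x) ↦ (y, y - x)`.
    refine ⟨M * tGL _ _ (single_dotProduct_single_of_ne hij (-1)) *
        tGL _ _ (single_dotProduct_single_of_ne hij.symm 1),
      mul_mem (mul_mem hM (tGL_single_single_mem_Elem hij _))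
        (tGL_single_single_mem_Elem hij.symm _), ?_, fun l hli hlj => ?_⟩
    · rw [colM_mul_tGL, ← colM_eq_mulVec, colM_mul_tGL, colM_mul_tGL, ← colM_eq_mulVec]
      simp [hij]
    · simp [starCol_mul_tGL, hli, hlj]

lemma tGL_single_mem_Elem (i : Fin n) {v : Fin n → R} (hv : Pi.single i 1 ⬝ᵥ v = 0) :
    tGL (Pi.single i 1) v hv ∈ Elem n R := by
  have hvi : v i = 0 := by rwa [single_one_dotProduct] at hv
  suffices ∃ h, tGL (Pi.single i 1) (∑ j, Pi.single j (v j)) h ∈ Elem n R by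
    obtain ⟨_, h⟩ := this
    simpa only [Finset.univ_sum_single] using h
  refine Finset.sum_induction _ (fun w => ∃ h, tGL (Pi.single i 1) w h ∈ Elem n R) ?_ ?_ ?_
  · rintro w w' ⟨hw, hwE⟩ ⟨hw', hwE'⟩
    refine ⟨by rw [dotProduct_add, hw, hw', add_zero], ?_⟩
    rw [tGL_add hw hw']
    exact mul_mem hwE hwE'
  · exact ⟨dotProduct_zero _, by rw [tGL_zero]; exact one_mem _⟩
  · intro j _
    obtain rfl | hij := eq_or_ne i j
    · simp only [hvi, Pi.single_zero]
      exact ⟨dotProduct_zero _, by rw [tGL_zero]; exact one_mem _⟩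
    · exact ⟨_, tGL_single_single_mem_Elem hij _⟩

end Elementary

section ElementaryColumns

open Matrix

variable {n : ℕ} [NeZero n] {R : Type} [CommRing R] {u v : Fin n → R}

lemma colM_mem_Ecol {M : GL (Fin n) R} (hM : M ∈ Elem n R) (k : Fin n) : colM M k ∈ Ecol n R := by
  obtain ⟨M', hM', hcol, -⟩ := exists_mem_Elem_colM_eq hM 0 k
  exact ⟨M', hM', hcol.symm⟩

lemma starCol_mem_Ecol {M : GL (Fin n) R} (hM : M ∈ Elem n R) (k : Fin n) :
    starCol M k ∈ Ecol n R :=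
  colM_mem_Ecol (contragredient_mem_Elem hM) k

lemma exists_mem_Elem_starCol_eq (hu : u ∈ Ecol n R) (k : Fin n) :
    ∃ M ∈ Elem n R, starCol M k = u := by
  obtain ⟨N, hN, rfl⟩ := hu
  obtain ⟨M, hM, hcol, -⟩ := exists_mem_Elem_colM_eq hN k 0
  exact ⟨contragredient M, contragredient_mem_Elem hM, (starCol_contragredient M k).trans hcol⟩

lemma mulVec_mem_Ecol {M : GL (Fin n) R} (hM : M ∈ Elem n R) (hu : u ∈ Ecol n R) :
    M.1 *ᵥ u ∈ Ecol n R := by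
  obtain ⟨N, hN, rfl⟩ := hu
  exact ⟨M * N, mul_mem hM hN, rfl⟩

lemma tGL_mem_Elem (hu : u ∈ Ecol n R) (huv : u ⬝ᵥ v = 0) : tGL u v huv ∈ Elem n R := by
  obtain ⟨N, hN, hNu⟩ := hu
  have hNu : N.1 *ᵥ Pi.single 0 1 = u := (mulVec_single_one N.1 0).trans hNu.symm
  have hNv : (contragredient N).1 *ᵥ ((contragredient N⁻¹).1 *ᵥ v) = v := by
    rw [mulVec_mulVec, ← Units.val_mul, ← map_mul, mul_inv_cancel, map_one, Units.val_one,
      one_mulVec]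
  have hv : Pi.single 0 1 ⬝ᵥ ((contragredient N⁻¹).1 *ᵥ v) = 0 := by
    rw [← mulVec_dotProduct_contragredient_mulVec N, hNu, hNv, huv]
  have hconj := mul_tGL_mul_inv N hv
  simp only [hNu, hNv] at hconj
  rw [← hconj]
  exact mul_mem (mul_mem hN (tGL_single_mem_Elem 0 hv)) (inv_mem hN)

end ElementaryColumns

/-- The index set of the generators `F(u,v)`. -/
@[ext]
structure FPair (n : ℕ) [NeZero n] (R : Type) [CommRing R] (I : Ideal R) where
  u : Fin n → R
  v : Fin n → R
  u_mem : u ∈ Ecol n R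
  v_mem : ∀ i, v i ∈ I
  orthogonal : u ⬝ᵥ v = 0

namespace FPair

open Matrix

variable {n : ℕ} [NeZero n] {R : Type} [CommRing R] {I : Ideal R}

/-- The matrix `t(u,v)`, which is elementary because `u` is a column of an elementary matrix. -/
def transvection (p : FPair n R I) : Elem n R :=
  ⟨tGL p.u p.v p.orthogonal, tGL_mem_Elem p.u_mem p.orthogonal⟩

/-- `E(n, R)` acts on the indices `(u,v)` by `N • (u,v) = (Nu, N*v)`. -/
instance : MulAction (Elem n R) (FPair n R I) where
  smul N p :=
    { u := N.1.1 *ᵥ p.u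
      v := (contragredient N.1).1 *ᵥ p.v
      u_mem := mulVec_mem_Ecol N.2 p.u_mem
      v_mem := fun i => dotProduct_mem_ideal ((contragredient N.1).1 i) p.v_mem
      orthogonal := by rw [mulVec_dotProduct_contragredient_mulVec, p.orthogonal] }
  one_smul p := by
    ext1
    · exact one_mulVec p.u
    · change (contragredient (1 : GL (Fin n) R)).1 *ᵥ p.v = p.v
      rw [map_one, Units.val_one, one_mulVec]
  mul_smul M N p := by
    ext1
    · exact (mulVec_mulVec p.u M.1.1 N.1.1).symm
    · change (contragredient (M.1 * N.1)).1 *ᵥ p.v =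
        (contragredient M.1).1 *ᵥ ((contragredient N.1).1 *ᵥ p.v)
      rw [map_mul, Units.val_mul, mulVec_mulVec]

end FPair

section Generation

open Matrix

variable {n : ℕ} [NeZero n] {R : Type} [CommRing R] {I : Ideal R}

/-- The generator `F(u,v)` of `St*(n, R, I)`. -/
def genF (p : FPair n R I) : StStar n R I :=
  PresentedGroup.of (StarGen.F p.u p.v p.u_mem p.v_mem p.orthogonal)

/-- The generator `S(w,z)` of `St*(n, R, I)`. -/
def genS (w z : Fin n → R) (hw : ∀ i, w i ∈ I) (hz : z ∈ Ecol n R) (hwz : w ⬝ᵥ z = 0) :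
    StStar n R I :=
  PresentedGroup.of (StarGen.S w z hw hz hwz)

lemma genF_mul_genF_mul_inv (p q : FPair n R I) :
    genF p * genF q * (genF p)⁻¹ = genF (p.transvection • q) := by
  have hv : (p.transvection • q).v = (1 - vecMulVec p.v p.u) *ᵥ q.v := by
    change (contragredient (tGL p.u p.v p.orthogonal)).1 *ᵥ q.v = _
    rw [contragredient_tGL, sub_eq_add_neg, ← vecMulVec_neg]
    rfl
  have hv_mem := (p.transvection • q).v_mem
  have horth := (p.transvection • q).orthogonal
  simp only [hv] at hv_mem horth
  have hconj : genF p * genF q * (genF p)⁻¹ =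
      genF ⟨(p.transvection • q).u, _, (p.transvection • q).u_mem, hv_mem, horth⟩ :=
    PresentedGroup.mk_eq_mk_of_mul_inv_mem (StarRels.conjF p.u p.v q.u q.v p.u_mem p.v_mem
      p.orthogonal q.u_mem q.v_mem q.orthogonal _ hv_mem horth)
  rw [hconj]
  exact congrArg genF (FPair.ext rfl hv.symm)

lemma genS_add {w w' z : Fin n → R} (hw : ∀ i, w i ∈ I) (hw' : ∀ i, w' i ∈ I)
    (hz : z ∈ Ecol n R) (hwz : w ⬝ᵥ z = 0) (hwz' : w' ⬝ᵥ z = 0) :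
    genS (w + w') z (fun i => add_mem (hw i) (hw' i)) hz
        (by rw [add_dotProduct, hwz, hwz', add_zero]) =
      genS w z hw hz hwz * genS w' z hw' hz hwz' :=
  (PresentedGroup.mk_eq_mk_of_mul_inv_mem (StarRels.addS w w' z hw hw' _ hz hwz hwz' _)).symm

lemma genS_zero {z : Fin n → R} (hz : z ∈ Ecol n R) :
    genS 0 z (fun _ => I.zero_mem) hz (zero_dotProduct z) = 1 := by
  have h := genS_add (w := 0) (w' := 0) (fun _ => I.zero_mem) (fun _ => I.zero_mem) hz
    (zero_dotProduct z) (zero_dotProduct z)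
  simp only [add_zero] at h
  exact left_eq_mul.1 h

lemma genF_colM_zero_eq_genS {M : GL (Fin n) R} (hM : M ∈ Elem n R) {a : R} (ha : a ∈ I)
    (horth : colM M 0 ⬝ᵥ starCol M 1 = 0) :
    genF ⟨colM M 0, a • starCol M 1, colM_mem_Ecol hM 0, fun _ => I.mul_mem_right _ ha,
        by rw [dotProduct_smul, horth, smul_zero]⟩ =
      genS (a • colM M 0) (starCol M 1) (fun _ => I.mul_mem_right _ ha) (starCol_mem_Ecol hM 1)
        (by rw [smul_dotProduct, horth, smul_zero]) :=
  PresentedGroup.mk_eq_mk_of_mul_inv_mem (StarRels.coinc M hM a ha _ _ _ _ _ _)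

/-- The vectors `w` for which `S(w,z)` is defined and is a product of `F`'s and their inverses. -/
def fGeneratedVectors (I : Ideal R) {z : Fin n → R} (hz : z ∈ Ecol n R) :
    AddSubmonoid (Fin n → R) where
  carrier := {w | ∃ (hw : ∀ i, w i ∈ I) (hwz : w ⬝ᵥ z = 0),
    genS w z hw hz hwz ∈ Subgroup.closure (Set.range genF)}
  zero_mem' := ⟨fun _ => I.zero_mem, zero_dotProduct z, by rw [genS_zero]; exact one_mem _⟩
  add_mem' := by
    rintro w w' ⟨hw, hwz, h⟩ ⟨hw', hwz', h'⟩
    exact ⟨_, _, genS_add hw hw' hz hwz hwz' ▸ mul_mem h h'⟩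

lemma smul_colM_mem_fGeneratedVectors {M : GL (Fin n) R} (hM : M ∈ Elem n R) {a : R} (ha : a ∈ I)
    {k : Fin n} (hk : k ≠ 1) : a • colM M k ∈ fGeneratedVectors I (starCol_mem_Ecol hM 1) := by
  have h10 : (1 : Fin n) ≠ 0 := fun h => by
    obtain rfl := Fin.one_eq_zero_iff.1 h
    exact hk (Subsingleton.elim _ _)
  obtain ⟨M', hM', hcol, hstar⟩ := exists_mem_Elem_colM_eq hM 0 k
  have horth := colM_dotProduct_starCol_of_ne M' h10.symm
  have hF := genF_colM_zero_eq_genS hM' ha horth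
  simp only [hcol, hstar 1 h10 hk.symm] at hF
  exact ⟨_, _, Subgroup.subset_closure ⟨_, hF⟩⟩

lemma genS_mem_closure_range_genF {w z : Fin n → R} (hw : ∀ i, w i ∈ I) (hz : z ∈ Ecol n R)
    (hwz : w ⬝ᵥ z = 0) : genS w z hw hz hwz ∈ Subgroup.closure (Set.range (genF (I := I))) := by
  obtain ⟨M, hM, rfl⟩ := exists_mem_Elem_starCol_eq hz 1
  suffices w ∈ fGeneratedVectors I hz from this.2.2
  rw [← sum_starCol_dotProduct_smul_colM M w]
  refine sum_mem fun k _ => ?_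
  obtain rfl | hk := eq_or_ne k 1
  · rw [dotProduct_comm, hwz, zero_smul]
    exact zero_mem _
  · exact smul_colM_mem_fGeneratedVectors hM (dotProduct_mem_ideal _ hw) hk

theorem mem_closure_range_genF (g : StStar n R I) :
    g ∈ Subgroup.closure (Set.range (genF (n := n) (I := I))) := by
  refine PresentedGroup.generated_by _ _ ?_ g
  rintro (⟨u, v, hu, hv, huv⟩ | ⟨w, z, hw, hz, hwz⟩)
  · exact Subgroup.subset_closure ⟨⟨u, v, hu, hv, huv⟩, rfl⟩
  · exact genS_mem_closure_range_genF hw hz hwz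

lemma map_mem_Elem {φ : StStar n R I →* GL (Fin n) R}
    (hφ : ∀ p, φ (genF p) = p.transvection) (g : StStar n R I) : φ g ∈ Elem n R := by
  suffices Subgroup.closure (Set.range genF) ≤ (Elem n R).comap φ from
    this (mem_closure_range_genF g)
  refine (Subgroup.closure_le _).2 ?_
  rintro _ ⟨p, rfl⟩
  rw [SetLike.mem_coe, Subgroup.mem_comap, hφ]
  exact p.transvection.2

theorem mul_genF_mul_inv {ψ : StStar n R I →* Elem n R}
    (hψ : ∀ p, ψ (genF p) = p.transvection) (g : StStar n R I) (p : FPair n R I) :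
    g * genF p * g⁻¹ = genF (ψ g • p) := by
  induction mem_closure_range_genF g using Subgroup.closure_induction generalizing p with
  | mem _ hx =>
    obtain ⟨q, rfl⟩ := hx
    rw [hψ, genF_mul_genF_mul_inv]
  | one => simp only [one_mul, inv_one, mul_one, map_one, one_smul]
  | mul x y _ _ hx hy =>
    calc x * y * genF p * (x * y)⁻¹ = x * (y * genF p * y⁻¹) * x⁻¹ := by group
      _ = genF (ψ (x * y) • p) := by rw [hy, hx, map_mul, mul_smul]
  | inv x _ hx =>
    have h := hx (ψ x⁻¹ • p)
    rw [smul_smul, ← map_mul, mul_inv_cancel, map_one, one_smul] at h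
    rw [← h]
    group

end Generation

theorem stmt10_general (n : ℕ) [NeZero n] (R : Type) [CommRing R] (I : Ideal R)
    (φ : StStar n R I →* Matrix.GeneralLinearGroup (Fin n) R)
    (hφF : ∀ (u v : Fin n → R) (hu : u ∈ Ecol n R) (hv : ∀ i, v i ∈ I)
      (ho : dotProduct u v = 0),
      (φ (PresentedGroup.of (StarGen.F u v hu hv ho)) : Matrix (Fin n) (Fin n) R) = tMat u v)
    (g : StStar n R I) (u v : Fin n → R) (hu : u ∈ Ecol n R) (hv : ∀ i, v i ∈ I)
    (ho : dotProduct u v = 0) :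
    ∃ (hu' : Matrix.mulVec (φ g).1 u ∈ Ecol n R)
      (hv' : ∀ i, Matrix.mulVec (Matrix.transpose (φ g)⁻¹.1) v i ∈ I)
      (ho' : dotProduct (Matrix.mulVec (φ g).1 u)
        (Matrix.mulVec (Matrix.transpose (φ g)⁻¹.1) v) = 0),
      g * PresentedGroup.of (StarGen.F u v hu hv ho) * g⁻¹ =
        PresentedGroup.of (StarGen.F (Matrix.mulVec (φ g).1 u)
          (Matrix.mulVec (Matrix.transpose (φ g)⁻¹.1) v) hu' hv' ho') := by
  have hφ_transvection (p : FPair n R I) : φ (genF p) = p.transvection :=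
    Units.ext (hφF p.u p.v p.u_mem p.v_mem p.orthogonal)
  let ψ := φ.codRestrict (Elem n R) (map_mem_Elem hφ_transvection)
  have hψ (p : FPair n R I) : ψ (genF p) = p.transvection := Subtype.ext (hφ_transvection p)
  let p : FPair n R I := ⟨u, v, hu, hv, ho⟩
  exact ⟨(ψ g • p).u_mem, (ψ g • p).v_mem, (ψ g • p).orthogonal, mul_genF_mul_inv hψ g p⟩

theorem stmt10 (n : ℕ) (hn : 4 ≤ n) [NeZero n] (R : Type) [CommRing R] (I : Ideal R)
    (φ : StStar n R I →* Matrix.GeneralLinearGroup (Fin n) R)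
    (hφF : ∀ (u v : Fin n → R) (hu : u ∈ Ecol n R) (hv : ∀ i, v i ∈ I)
      (ho : dotProduct u v = 0),
      (φ (PresentedGroup.of (StarGen.F u v hu hv ho)) : Matrix (Fin n) (Fin n) R) = tMat u v)
    (hφS : ∀ (u v : Fin n → R) (hu : ∀ i, u i ∈ I) (hv : v ∈ Ecol n R)
      (ho : dotProduct u v = 0),
      (φ (PresentedGroup.of (StarGen.S u v hu hv ho)) : Matrix (Fin n) (Fin n) R) = tMat u v) :
    ∀ (g : StStar n R I) (u v : Fin n → R) (hu : u ∈ Ecol n R) (hv : ∀ i, v i ∈ I)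
      (ho : dotProduct u v = 0)
      (hu' : Matrix.mulVec (φ g : Matrix (Fin n) (Fin n) R) u ∈ Ecol n R)
      (hv' : ∀ i, Matrix.mulVec (Matrix.transpose (((φ g)⁻¹ : Matrix.GeneralLinearGroup (Fin n) R) :
        Matrix (Fin n) (Fin n) R)) v i ∈ I)
      (ho' : dotProduct (Matrix.mulVec (φ g : Matrix (Fin n) (Fin n) R) u)
        (Matrix.mulVec (Matrix.transpose (((φ g)⁻¹ : Matrix.GeneralLinearGroup (Fin n) R) :
          Matrix (Fin n) (Fin n) R)) v) = 0),
      g * PresentedGroup.of (StarGen.F u v hu hv ho) * g⁻¹ =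
        PresentedGroup.of (StarGen.F (Matrix.mulVec (φ g : Matrix (Fin n) (Fin n) R) u)
          (Matrix.mulVec (Matrix.transpose (((φ g)⁻¹ : Matrix.GeneralLinearGroup (Fin n) R) :
            Matrix (Fin n) (Fin n) R)) v) hu' hv' ho') := by
  intro g u v hu hv ho _ _ _
  exact (stmt10_general n R I φ hφF g u v hu hv ho).elim fun _ ⟨_, _, h⟩ => h
end

section
/- Let R be a commutative ring, I an ideal of R, and n ≥ 4. Let φ : St*(n,R,I) → GL(n,R) be the natural homomorphism sending F(u,v) ↦ t(u,v) and S(u,v) ↦ t(u,v). Then for every g ∈ St*(n,R,I) and every generator S(u,v), one has g·S(u,v)·g⁻¹ = S(φ(g)·u, (φ(g)⁻¹)ᵗ·v). -/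
/-!
The vectors `u ∈ Iⁿ` orthogonal to `v = M*e₂`, with `M ∈ E(n, R)`, are the sums of multiples
`a • x` with `a ∈ I` and `x` a column of `M` other than the second. For such an `x` the pair
`(x, v)` is again of the form `(Ne₁, N*e₂)`, so (R4) turns `S(a • x, v)` into `F(x, a • v)`.
Thus (R2) presents every `S(u, v)` as a product of generators `F`, and for two generators `F` the
conjugation formula is (R3). Hence the formula holds for conjugates of `S(u, v)` by generators `F`,
and therefore by everything, because the generators `F` generate the group.
-/

namespace StStar

open Matrix

section Contragredient

variable {ι R : Type*} [Fintype ι] [DecidableEq ι] [CommRing R]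

/-- The contragredient `g* = (g⁻¹)ᵗ`, through which `GL` acts on column vectors dually to its
standard action `g • u = g *ᵥ u`. -/
def contragredient : GeneralLinearGroup ι R →* GeneralLinearGroup ι R where
  toFun g :=
    { val := (g⁻¹).valᵀ
      inv := g.valᵀ
      val_inv := by rw [← transpose_mul, g.mul_inv, transpose_one]
      inv_val := by rw [← transpose_mul, g.inv_mul, transpose_one] }
  map_one' := Units.ext (by simp)
  map_mul' g h := Units.ext (by simp only [_root_.mul_inv_rev, Units.val_mul, transpose_mul])

theorem val_contragredient (g : GeneralLinearGroup ι R) : (contragredient g).val = (g⁻¹).valᵀ :=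
  rfl

theorem contragredient_contragredient (g : GeneralLinearGroup ι R) :
    contragredient (contragredient g) = g :=
  Units.ext (transpose_transpose g.val)

theorem smul_dotProduct_contragredient_smul (g : GeneralLinearGroup ι R) (u v : ι → R) :
    (g • u) ⬝ᵥ (contragredient g • v) = u ⬝ᵥ v := by
  simp only [Units.smul_def, smul_eq_mulVec]
  rw [val_contragredient, mulVec_transpose, dotProduct_comm, ← dotProduct_mulVec, mulVec_mulVec,
    g.inv_mul, one_mulVec, dotProduct_comm]

end Contragredient

variable {n : ℕ} {R : Type} [CommRing R]

section Columns

theorem colM_eq_smul_single (M : GeneralLinearGroup (Fin n) R) (k : Fin n) :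
    colM M k = M • (Pi.single k 1 : Fin n → R) :=
  (mulVec_single_one M.val k).symm

theorem starCol_eq_colM_contragredient (M : GeneralLinearGroup (Fin n) R) (k : Fin n) :
    starCol M k = colM (contragredient M) k :=
  rfl

theorem colM_mul (g M : GeneralLinearGroup (Fin n) R) (k : Fin n) :
    colM (g * M) k = g • colM M k := by
  simp only [colM_eq_smul_single, mul_smul]

theorem starCol_mul (g M : GeneralLinearGroup (Fin n) R) (k : Fin n) :
    starCol (g * M) k = contragredient g • starCol M k := by
  simp only [starCol_eq_colM_contragredient, map_mul, colM_mul]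

theorem colM_dotProduct_starCol (M : GeneralLinearGroup (Fin n) R) {i j : Fin n} (hij : i ≠ j) :
    colM M i ⬝ᵥ starCol M j = 0 := by
  rw [starCol_eq_colM_contragredient, colM_eq_smul_single, colM_eq_smul_single,
    smul_dotProduct_contragredient_smul, dotProduct_single_one, Pi.single_eq_of_ne' hij]

theorem sum_inv_smul_smul_colM (M : GeneralLinearGroup (Fin n) R) (u : Fin n → R) :
    ∑ i, (M⁻¹ • u) i • colM M i = u := by
  calc ∑ i, (M⁻¹ • u) i • colM M i = M • M⁻¹ • u := by
        simp only [Units.smul_def M, smul_eq_mulVec, mulVec_eq_sum, op_smul_eq_smul]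
        rfl
    _ = u := smul_inv_smul M u

end Columns

section Transvection

/-- The transvection `t(u, v)`, for `uᵗv = 0`, as an invertible matrix. -/
def transvectionGL (u v : Fin n → R) (huv : u ⬝ᵥ v = 0) : GeneralLinearGroup (Fin n) R where
  val := tMat u v
  inv := tMat u (-v)
  val_inv := by
    simp [tMat, add_mul, mul_add, vecMulVec_mul_vecMulVec, vecMulVec_neg, dotProduct_comm v, huv]
  inv_val := by
    simp [tMat, add_mul, mul_add, vecMulVec_mul_vecMulVec, vecMulVec_neg, dotProduct_comm v, huv]

theorem val_transvectionGL (u v : Fin n → R) (huv : u ⬝ᵥ v = 0) :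
    (transvectionGL u v huv).val = tMat u v :=
  rfl

theorem val_contragredient_transvectionGL (u v : Fin n → R) (huv : u ⬝ᵥ v = 0) :
    (contragredient (transvectionGL u v huv)).val = 1 - vecMulVec v u := by
  change (tMat u (-v))ᵀ = _
  rw [tMat, transpose_add, transpose_one, transpose_vecMulVec, neg_vecMulVec, sub_eq_add_neg]

theorem transvectionGL_smul (u v : Fin n → R) (huv : u ⬝ᵥ v = 0) (w : Fin n → R) :
    transvectionGL u v huv • w = w + (v ⬝ᵥ w) • u := by
  rw [Units.smul_def, smul_eq_mulVec, val_transvectionGL, tMat, add_mulVec, one_mulVec,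
    vecMulVec_mulVec, op_smul_eq_smul]

theorem contragredient_transvectionGL_smul (u v : Fin n → R) (huv : u ⬝ᵥ v = 0) (w : Fin n → R) :
    contragredient (transvectionGL u v huv) • w = w - (u ⬝ᵥ w) • v := by
  rw [Units.smul_def, smul_eq_mulVec, val_contragredient_transvectionGL, sub_mulVec, one_mulVec,
    vecMulVec_mulVec, op_smul_eq_smul]

theorem transvectionGL_mul_transvectionGL (u v w : Fin n → R) (huv : u ⬝ᵥ v = 0)
    (huw : u ⬝ᵥ w = 0) :
    transvectionGL u v huv * transvectionGL u w huw =
      transvectionGL u (v + w) (by rw [dotProduct_add, huv, huw, add_zero]) := by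
  refine Units.ext ?_
  simp only [Units.val_mul, val_transvectionGL, tMat, add_mul, mul_add, vecMulVec_mul_vecMulVec,
    vecMulVec_add, dotProduct_comm v, huv, zero_smul, vecMulVec_zero, one_mul, mul_one,
    add_zero]
  abel

theorem conj_transvectionGL (g : GeneralLinearGroup (Fin n) R) (u v : Fin n → R)
    (huv : u ⬝ᵥ v = 0) :
    g * transvectionGL u v huv * g⁻¹ = transvectionGL (g • u) (contragredient g • v)
      ((smul_dotProduct_contragredient_smul g u v).trans huv) := by
  refine Units.ext ?_
  change g.val * tMat u v * (g⁻¹).val = tMat (g.val *ᵥ u) ((g⁻¹).valᵀ *ᵥ v)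
  rw [tMat, tMat, mul_add, add_mul, mul_one, g.mul_inv, mul_vecMulVec, vecMulVec_mul,
    mulVec_transpose]

end Transvection

section Elementary

theorem vecMulVec_single_single {l m α : Type*} [DecidableEq l] [DecidableEq m] [MulZeroClass α]
    (i : l) (j : m) (a b : α) :
    vecMulVec (Pi.single i a) (Pi.single j b) = single i j (a * b) := by
  ext k l
  simp only [vecMulVec_apply, single_apply, Pi.single_apply]
  grind [zero_mul, mul_zero]

theorem transvectionGL_single_mem_Elem {i j : Fin n} (hij : i ≠ j) (r : R)
    (h : Pi.single i 1 ⬝ᵥ Pi.single j r = 0) :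
    transvectionGL (Pi.single i 1) (Pi.single j r) h ∈ Elem n R := by
  refine Subgroup.subset_closure ⟨i, j, hij, r, ?_⟩
  rw [val_transvectionGL, tMat, vecMulVec_single_single, one_mul]

theorem contragredient_mem_Elem {M : GeneralLinearGroup (Fin n) R} (hM : M ∈ Elem n R) :
    contragredient M ∈ Elem n R := by
  suffices Elem n R ≤ (Elem n R).comap contragredient from this hM
  refine (Subgroup.closure_le _).mpr ?_
  rintro T ⟨i, j, hij, r, hT⟩
  have hdot : Pi.single i 1 ⬝ᵥ Pi.single j r = 0 := by simp [hij]
  have hT' : T = transvectionGL (Pi.single i 1) (Pi.single j r) hdot :=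
    Units.ext (by rw [hT, val_transvectionGL, tMat, vecMulVec_single_single, one_mul])
  refine Subgroup.subset_closure ⟨j, i, hij.symm, -r, ?_⟩
  rw [hT', val_contragredient_transvectionGL, vecMulVec_single_single, mul_one, ← single_neg,
    sub_eq_add_neg]

theorem exists_mem_Elem_smul_single (i j : Fin n) :
    ∃ W ∈ Elem n R, W • (Pi.single i 1 : Fin n → R) = Pi.single j 1 ∧
      ∀ k, k ≠ i → k ≠ j → contragredient W • (Pi.single k 1 : Fin n → R) = Pi.single k 1 := by
  obtain rfl | hij := eq_or_ne i j
  · exact ⟨1, one_mem _, one_smul _ _, fun k _ _ => by rw [map_one, one_smul]⟩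
  have hij' : (Pi.single i 1 : Fin n → R) ⬝ᵥ Pi.single j (-1) = 0 := by simp [hij]
  have hji' : (Pi.single j 1 : Fin n → R) ⬝ᵥ Pi.single i 1 = 0 := by simp [hij.symm]
  refine ⟨transvectionGL _ _ hij' * transvectionGL _ _ hji',
    mul_mem (transvectionGL_single_mem_Elem hij _ _)
      (transvectionGL_single_mem_Elem hij.symm _ _), ?_, fun k hki hkj => ?_⟩
  · simp [mul_smul, transvectionGL_smul, hij.symm]
  · simp [mul_smul, contragredient_transvectionGL_smul, hki.symm, hkj.symm]

variable [NeZero n]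

theorem transvectionGL_single_zero_mem_Elem (w : Fin n → R) (hw : Pi.single 0 1 ⬝ᵥ w = 0) :
    transvectionGL (Pi.single 0 1) w hw ∈ Elem n R := by
  let InElem (w : Fin n → R) : Prop :=
    ∃ hw : Pi.single 0 1 ⬝ᵥ w = 0, transvectionGL (Pi.single 0 1) w hw ∈ Elem n R
  have add (v w : Fin n → R) : InElem v → InElem w → InElem (v + w) := by
    rintro ⟨hv, hv'⟩ ⟨hw, hw'⟩
    exact ⟨_, transvectionGL_mul_transvectionGL _ v w hv hw ▸ mul_mem hv' hw'⟩
  have zero : InElem 0 := by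
    refine ⟨dotProduct_zero _, ?_⟩
    convert one_mem (Elem n R)
    exact Units.ext (by simp [transvectionGL, tMat])
  have single (j : Fin n) : InElem (Pi.single j (w j)) := by
    obtain rfl | hj := eq_or_ne 0 j
    · rw [single_one_dotProduct] at hw
      rwa [hw, Pi.single_zero]
    · exact ⟨by simp [hj], transvectionGL_single_mem_Elem hj _ _⟩
  have sum : InElem (∑ j, Pi.single j (w j)) :=
    Finset.sum_induction _ InElem add zero fun j _ => single j
  rw [Finset.univ_sum_single] at sum
  exact sum.2

theorem mem_Ecol_iff {u : Fin n → R} : u ∈ Ecol n R ↔ ∃ M ∈ Elem n R, colM M 0 = u :=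
  ⟨fun ⟨M, hM, hu⟩ => ⟨M, hM, hu.symm⟩, fun ⟨M, hM, hu⟩ => ⟨M, hM, hu.symm⟩⟩

theorem smul_mem_Ecol {g : GeneralLinearGroup (Fin n) R} (hg : g ∈ Elem n R) {u : Fin n → R}
    (hu : u ∈ Ecol n R) : g • u ∈ Ecol n R := by
  obtain ⟨M, hM, rfl⟩ := mem_Ecol_iff.mp hu
  exact mem_Ecol_iff.mpr ⟨g * M, mul_mem hg hM, colM_mul g M 0⟩

theorem colM_mem_Ecol {M : GeneralLinearGroup (Fin n) R} (hM : M ∈ Elem n R) (k : Fin n) :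
    colM M k ∈ Ecol n R := by
  obtain ⟨W, hW, hW0, -⟩ := exists_mem_Elem_smul_single (R := R) 0 k
  refine mem_Ecol_iff.mpr ⟨M * W, mul_mem hM hW, ?_⟩
  rw [colM_mul, colM_eq_smul_single W, hW0, colM_eq_smul_single]

theorem exists_starCol_eq {v : Fin n → R} (hv : v ∈ Ecol n R) (k : Fin n) :
    ∃ M ∈ Elem n R, starCol M k = v := by
  obtain ⟨N, hN, rfl⟩ := mem_Ecol_iff.mp hv
  obtain ⟨W, hW, hWk, -⟩ := exists_mem_Elem_smul_single (R := R) k 0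
  refine ⟨contragredient (N * W), contragredient_mem_Elem (mul_mem hN hW), ?_⟩
  rw [starCol_eq_colM_contragredient, contragredient_contragredient, colM_mul,
    colM_eq_smul_single W, hWk, colM_eq_smul_single]

theorem transvectionGL_mem_Elem {u v : Fin n → R} (hu : u ∈ Ecol n R) (huv : u ⬝ᵥ v = 0) :
    transvectionGL u v huv ∈ Elem n R := by
  obtain ⟨M, hM, rfl⟩ := mem_Ecol_iff.mp hu
  obtain ⟨w, rfl⟩ : ∃ w, contragredient M • w = v := ⟨_, smul_inv_smul (contragredient M) v⟩
  have hw : Pi.single 0 1 ⬝ᵥ w = 0 := by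
    rwa [colM_eq_smul_single, smul_dotProduct_contragredient_smul] at huv
  have hconj := conj_transvectionGL M _ w hw
  simp only [← colM_eq_smul_single] at hconj
  rw [← hconj]
  exact mul_mem (mul_mem hM (transvectionGL_single_zero_mem_Elem w hw)) (inv_mem hM)

end Elementary

section Orthogonal

variable {I : Ideal R}

variable (I) in
/-- The vectors of `Iⁿ` orthogonal to `v`: those `u` for which `S(u, v)` and `F(v, u)` are
defined once `v ∈ E(n, R)e₁`. -/
def orthogonal (v : Fin n → R) : Submodule R (Fin n → R) where
  carrier := {u | (∀ i, u i ∈ I) ∧ u ⬝ᵥ v = 0}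
  zero_mem' := ⟨fun _ => I.zero_mem, zero_dotProduct v⟩
  add_mem' hu hw :=
    ⟨fun i => I.add_mem (hu.1 i) (hw.1 i), by rw [add_dotProduct, hu.2, hw.2, add_zero]⟩
  smul_mem' r _ hu :=
    ⟨fun i => I.mul_mem_left r (hu.1 i), by rw [smul_dotProduct, hu.2, smul_zero]⟩

theorem smul_mem_ideal (g : GeneralLinearGroup (Fin n) R) {u : Fin n → R} (hu : ∀ i, u i ∈ I)
    (i : Fin n) : (g • u) i ∈ I :=
  Ideal.sum_mem (t := Finset.univ) I fun j _ => I.mul_mem_left (g.val i j) (hu j)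

theorem dotProduct_of_mem_orthogonal {u v : Fin n → R} (hv : v ∈ orthogonal I u) : u ⬝ᵥ v = 0 :=
  (dotProduct_comm u v).trans hv.2

theorem smul_mem_orthogonal (g : GeneralLinearGroup (Fin n) R) {u v : Fin n → R}
    (hu : u ∈ orthogonal I v) : g • u ∈ orthogonal I (contragredient g • v) :=
  ⟨smul_mem_ideal g hu.1, by rw [smul_dotProduct_contragredient_smul, hu.2]⟩

theorem contragredient_smul_mem_orthogonal (g : GeneralLinearGroup (Fin n) R) {u v : Fin n → R}
    (hv : v ∈ orthogonal I u) : contragredient g • v ∈ orthogonal I (g • u) := by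
  simpa only [contragredient_contragredient] using smul_mem_orthogonal (contragredient g) hv

variable [NeZero n]

/-- The pairs `(Me₁, M*e₂)` with `M ∈ E(n, R)`, for which relation (R4) identifies `F(u, a • v)`
with `S(a • u, v)`. -/
def IsElementaryPair (u v : Fin n → R) : Prop :=
  ∃ M ∈ Elem n R, colM M 0 = u ∧ starCol M 1 = v

namespace IsElementaryPair

variable {u v : Fin n → R}

theorem left_mem (h : IsElementaryPair u v) : u ∈ Ecol n R := by
  obtain ⟨M, hM, rfl, -⟩ := h
  exact colM_mem_Ecol hM 0

theorem right_mem (h : IsElementaryPair u v) : v ∈ Ecol n R := by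
  obtain ⟨M, hM, -, rfl⟩ := h
  exact colM_mem_Ecol (contragredient_mem_Elem hM) 1

theorem smul {g : GeneralLinearGroup (Fin n) R} (hg : g ∈ Elem n R) (h : IsElementaryPair u v) :
    IsElementaryPair (g • u) (contragredient g • v) := by
  obtain ⟨M, hM, rfl, rfl⟩ := h
  exact ⟨g * M, mul_mem hg hM, colM_mul g M 0, starCol_mul g M 1⟩

variable [NeZero (1 : Fin n)]

theorem dotProduct_eq_zero (h : IsElementaryPair u v) : u ⬝ᵥ v = 0 := by
  obtain ⟨M, -, rfl, rfl⟩ := h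
  exact colM_dotProduct_starCol M zero_ne_one

theorem smul_left_mem_orthogonal (h : IsElementaryPair u v) {a : R} (ha : a ∈ I) :
    a • u ∈ orthogonal I v :=
  ⟨fun i => I.mul_mem_right (u i) ha, by rw [smul_dotProduct, h.dotProduct_eq_zero, smul_zero]⟩

theorem smul_right_mem_orthogonal (h : IsElementaryPair u v) {a : R} (ha : a ∈ I) :
    a • v ∈ orthogonal I u :=
  ⟨fun i => I.mul_mem_right (v i) ha, by
    rw [smul_dotProduct, dotProduct_comm, h.dotProduct_eq_zero, smul_zero]⟩

end IsElementaryPair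

variable [NeZero (1 : Fin n)]

theorem isElementaryPair_colM_starCol {M : GeneralLinearGroup (Fin n) R} (hM : M ∈ Elem n R)
    {i : Fin n} (hi : i ≠ 1) : IsElementaryPair (colM M i) (starCol M 1) := by
  obtain ⟨W, hW, hW0, hW1⟩ := exists_mem_Elem_smul_single (R := R) 0 i
  refine ⟨M * W, mul_mem hM hW, ?_, ?_⟩
  · rw [colM_mul, colM_eq_smul_single W, hW0, colM_eq_smul_single]
  · rw [starCol_mul, starCol_eq_colM_contragredient W, colM_eq_smul_single,
      hW1 1 one_ne_zero hi.symm, starCol_eq_colM_contragredient, colM_eq_smul_single]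

theorem orthogonal_induction {v : Fin n → R} (hv : v ∈ Ecol n R)
    {p : (u : Fin n → R) → u ∈ orthogonal I v → Prop} (zero : p 0 (zero_mem _))
    (add : ∀ u hu w hw, p u hu → p w hw → p (u + w) (add_mem hu hw))
    (smul : ∀ a (ha : a ∈ I) x (hx : IsElementaryPair x v),
      p (a • x) (hx.smul_left_mem_orthogonal ha))
    {u : Fin n → R} (hu : u ∈ orthogonal I v) : p u hu := by
  obtain ⟨M, hM, rfl⟩ := exists_starCol_eq hv 1
  have coeff_mem (i : Fin n) : (M⁻¹ • u) i ∈ I := smul_mem_ideal M⁻¹ hu.1 i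
  have coeff_one : (M⁻¹ • u) 1 = 0 := (dotProduct_comm _ _).trans hu.2
  have sum : ∃ h, p (∑ i, (M⁻¹ • u) i • colM M i) h := by
    refine Finset.sum_induction _ (fun w => ∃ hw, p w hw) ?_ ⟨_, zero⟩ fun i _ => ?_
    · rintro w x ⟨hw, pw⟩ ⟨hx, px⟩
      exact ⟨_, add w hw x hx pw px⟩
    · obtain rfl | hi := eq_or_ne i 1
      · rw [coeff_one, zero_smul]
        exact ⟨_, zero⟩
      · exact ⟨_, smul _ (coeff_mem i) _ (isElementaryPair_colM_starCol hM hi)⟩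
  rw [sum_inv_smul_smul_colM] at sum
  exact sum.2

end Orthogonal

section Generators

variable [NeZero n] {I : Ideal R}

/-- The generator `F(u, v)`, as an element of `St*(n, R, I)`. -/
def F (u v : Fin n → R) (hu : u ∈ Ecol n R) (hv : v ∈ orthogonal I u) : StStar n R I :=
  PresentedGroup.of (StarGen.F u v hu hv.1 (dotProduct_of_mem_orthogonal hv))

/-- The generator `S(u, v)`, as an element of `St*(n, R, I)`. -/
def S (u v : Fin n → R) (hu : u ∈ orthogonal I v) (hv : v ∈ Ecol n R) : StStar n R I :=
  PresentedGroup.of (StarGen.S u v hu.1 hv hu.2)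

theorem S_mul_S {u w v : Fin n → R} (hu : u ∈ orthogonal I v) (hw : w ∈ orthogonal I v)
    (hv : v ∈ Ecol n R) : S u v hu hv * S w v hw hv = S (u + w) v (add_mem hu hw) hv :=
  mul_inv_eq_one.mp <| PresentedGroup.one_of_mem (rels := {w | StarRels n R I w}) <|
    StarRels.addS u w v hu.1 hw.1 (add_mem hu hw).1 hv hu.2 hw.2 (add_mem hu hw).2

theorem S_zero {v : Fin n → R} (hv : v ∈ Ecol n R) :
    S 0 v (zero_mem (orthogonal I v)) hv = 1 := by
  have hadd := S_mul_S (zero_mem (orthogonal I v)) (zero_mem _) hv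
  simp only [add_zero] at hadd
  exact mul_eq_left.mp hadd

theorem conj_F_F {u v x y : Fin n → R} (hu : u ∈ Ecol n R) (hv : v ∈ orthogonal I u)
    (hx : x ∈ Ecol n R) (hy : y ∈ orthogonal I x) :
    let t := transvectionGL u v (dotProduct_of_mem_orthogonal hv)
    F u v hu hv * F x y hx hy * (F u v hu hv)⁻¹ =
      F (t • x) (contragredient t • y) (smul_mem_Ecol (transvectionGL_mem_Elem hu _) hx)
        (contragredient_smul_mem_orthogonal t hy) := by
  intro t
  have ht : contragredient t • y = (1 - vecMulVec v u) *ᵥ y := by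
    rw [Units.smul_def, smul_eq_mulVec, val_contragredient_transvectionGL]
  have hx' : t • x ∈ Ecol n R := smul_mem_Ecol (transvectionGL_mem_Elem hu _) hx
  have hy' : contragredient t • y ∈ orthogonal I (t • x) :=
    contragredient_smul_mem_orthogonal t hy
  simp only [ht] at hy' ⊢
  exact mul_inv_eq_one.mp <| PresentedGroup.one_of_mem (rels := {w | StarRels n R I w}) <|
    StarRels.conjF u v x y hu hv.1 (dotProduct_of_mem_orthogonal hv) hx hy.1
      (dotProduct_of_mem_orthogonal hy) hx' hy'.1 (dotProduct_of_mem_orthogonal hy')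

variable [NeZero (1 : Fin n)]

theorem F_smul_eq_S_smul {u v : Fin n → R} (h : IsElementaryPair u v) {a : R} (ha : a ∈ I) :
    F u (a • v) h.left_mem (h.smul_right_mem_orthogonal ha) =
      S (a • u) v (h.smul_left_mem_orthogonal ha) h.right_mem := by
  have hau := h.smul_left_mem_orthogonal ha
  have hav := h.smul_right_mem_orthogonal ha
  have hu := h.left_mem
  have hv := h.right_mem
  obtain ⟨M, hM, rfl, rfl⟩ := h
  exact mul_inv_eq_one.mp <| PresentedGroup.one_of_mem (rels := {w | StarRels n R I w}) <|
    StarRels.coinc M hM a ha hu hav.1 (dotProduct_of_mem_orthogonal hav) hau.1 hv hau.2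

theorem conj_F_S {u v x y : Fin n → R} (hu : u ∈ Ecol n R) (hv : v ∈ orthogonal I u)
    (hx : x ∈ orthogonal I y) (hy : y ∈ Ecol n R) :
    let t := transvectionGL u v (dotProduct_of_mem_orthogonal hv)
    F u v hu hv * S x y hx hy * (F u v hu hv)⁻¹ =
      S (t • x) (contragredient t • y) (smul_mem_orthogonal t hx)
        (smul_mem_Ecol (contragredient_mem_Elem (transvectionGL_mem_Elem hu _)) hy) := by
  intro t
  have ht : t ∈ Elem n R := transvectionGL_mem_Elem hu _
  induction hx using orthogonal_induction hy with
  | zero => simp only [smul_zero, S_zero, mul_one, mul_inv_cancel]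
  | add x hx w hw ihx ihw =>
    simp only [smul_add]
    rw [← S_mul_S hx hw, ← S_mul_S (smul_mem_orthogonal t hx) (smul_mem_orthogonal t hw), ← ihx,
      ← ihw]
    group
  | smul a ha x h =>
    calc F u v hu hv * S (a • x) y (h.smul_left_mem_orthogonal ha) hy * (F u v hu hv)⁻¹
        = F u v hu hv * F x (a • y) h.left_mem (h.smul_right_mem_orthogonal ha) *
            (F u v hu hv)⁻¹ := by rw [F_smul_eq_S_smul h ha]
      _ = F (t • x) (a • contragredient t • y) (h.smul ht).left_mem
            ((h.smul ht).smul_right_mem_orthogonal ha) := by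
          simp only [conj_F_F, smul_comm a, t]
      _ = S (a • t • x) (contragredient t • y) ((h.smul ht).smul_left_mem_orthogonal ha)
            (h.smul ht).right_mem := F_smul_eq_S_smul (h.smul ht) ha
      _ = S (t • a • x) (contragredient t • y)
            (smul_mem_orthogonal t (h.smul_left_mem_orthogonal ha)) (h.smul ht).right_mem := by
          simp only [smul_comm a]

theorem closure_setOf_F_eq_top :
    Subgroup.closure {g : StStar n R I | ∃ u v hu hv, F u v hu hv = g} = ⊤ := by
  set K := Subgroup.closure {g : StStar n R I | ∃ u v hu hv, F u v hu hv = g}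
  have F_mem {u v : Fin n → R} (hu : u ∈ Ecol n R) (hv : v ∈ orthogonal I u) : F u v hu hv ∈ K :=
    Subgroup.subset_closure ⟨u, v, hu, hv, rfl⟩
  have S_mem {u v : Fin n → R} (hu : u ∈ orthogonal I v) (hv : v ∈ Ecol n R) :
      S u v hu hv ∈ K := by
    induction hu using orthogonal_induction hv with
    | zero => exact S_zero hv ▸ one_mem K
    | add u hu w hw ihu ihw => exact S_mul_S hu hw hv ▸ mul_mem ihu ihw
    | smul a ha x h => exact F_smul_eq_S_smul h ha ▸ F_mem _ _
  rw [eq_top_iff, ← PresentedGroup.closure_range_of, Subgroup.closure_le]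
  rintro _ ⟨⟨u, v, hu, hv, huv⟩ | ⟨u, v, hu, hv, huv⟩, rfl⟩
  · exact F_mem hu ⟨hv, (dotProduct_comm v u).trans huv⟩
  · exact S_mem ⟨hu, huv⟩ hv

end Generators

section Conjugation

variable [NeZero n] [NeZero (1 : Fin n)] {I : Ideal R}
  {φ : StStar n R I →* GeneralLinearGroup (Fin n) R}

theorem map_mem_Elem
    (hφ : ∀ u v hu hv, φ (F u v hu hv) = transvectionGL u v (dotProduct_of_mem_orthogonal hv))
    (g : StStar n R I) : φ g ∈ Elem n R := by
  suffices ⊤ ≤ (Elem n R).comap φ from this (Subgroup.mem_top g)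
  rw [← closure_setOf_F_eq_top, Subgroup.closure_le]
  rintro _ ⟨u, v, hu, hv, rfl⟩
  rw [SetLike.mem_coe, Subgroup.mem_comap, hφ]
  exact transvectionGL_mem_Elem hu _

theorem conj_S
    (hφ : ∀ u v hu hv, φ (F u v hu hv) = transvectionGL u v (dotProduct_of_mem_orthogonal hv))
    (g : StStar n R I) {u v : Fin n → R} (hu : u ∈ orthogonal I v) (hv : v ∈ Ecol n R) :
    g * S u v hu hv * g⁻¹ =
      S (φ g • u) (contragredient (φ g) • v) (smul_mem_orthogonal (φ g) hu)
        (smul_mem_Ecol (contragredient_mem_Elem (map_mem_Elem hφ g)) hv) := by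
  have hg : g ∈ Subgroup.closure {g : StStar n R I | ∃ u v hu hv, F u v hu hv = g} := by
    rw [closure_setOf_F_eq_top]
    exact Subgroup.mem_top g
  induction hg using Subgroup.closure_induction generalizing u v with
  | mem f hf =>
    obtain ⟨x, y, hx, hy, rfl⟩ := hf
    simp only [hφ, conj_F_S]
  | one => simp only [map_one, one_smul, one_mul, inv_one, mul_one]
  | mul g h _ _ ihg ihh =>
    have hhv := smul_mem_Ecol (contragredient_mem_Elem (map_mem_Elem hφ h)) hv
    have hconj := ihg (smul_mem_orthogonal (φ h) hu) hhv
    simp only [map_mul, mul_smul]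
    rw [← hconj, ← ihh hu hv]
    group
  | inv g _ ih =>
    have hgv := smul_mem_Ecol (contragredient_mem_Elem (map_mem_Elem hφ g⁻¹)) hv
    have hconj := ih (smul_mem_orthogonal (φ g⁻¹) hu) hgv
    simp only [map_inv, smul_inv_smul] at hconj ⊢
    rw [← hconj]
    group

end Conjugation

end StStar

theorem stmt11_general (n : ℕ) (hn : 2 ≤ n) [NeZero n] (R : Type) [CommRing R] (I : Ideal R)
    (φ : StStar n R I →* Matrix.GeneralLinearGroup (Fin n) R)
    (hφF : ∀ (u v : Fin n → R) (hu : u ∈ Ecol n R) (hv : ∀ i, v i ∈ I)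
      (ho : dotProduct u v = 0),
      (φ (PresentedGroup.of (StarGen.F u v hu hv ho)) : Matrix (Fin n) (Fin n) R) = tMat u v) :
    ∀ (g : StStar n R I) (u v : Fin n → R) (hu : ∀ i, u i ∈ I) (hv : v ∈ Ecol n R)
      (ho : dotProduct u v = 0)
      (hu' : ∀ i, Matrix.mulVec (φ g : Matrix (Fin n) (Fin n) R) u i ∈ I)
      (hv' : Matrix.mulVec (Matrix.transpose (((φ g)⁻¹ : Matrix.GeneralLinearGroup (Fin n) R) :
        Matrix (Fin n) (Fin n) R)) v ∈ Ecol n R)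
      (ho' : dotProduct (Matrix.mulVec (φ g : Matrix (Fin n) (Fin n) R) u)
        (Matrix.mulVec (Matrix.transpose (((φ g)⁻¹ : Matrix.GeneralLinearGroup (Fin n) R) :
          Matrix (Fin n) (Fin n) R)) v) = 0),
      g * PresentedGroup.of (StarGen.S u v hu hv ho) * g⁻¹ =
        PresentedGroup.of (StarGen.S (Matrix.mulVec (φ g : Matrix (Fin n) (Fin n) R) u)
          (Matrix.mulVec (Matrix.transpose (((φ g)⁻¹ : Matrix.GeneralLinearGroup (Fin n) R) :
            Matrix (Fin n) (Fin n) R)) v) hu' hv' ho') := by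
  intro g u v hu hv huv _ _ _
  have : NeZero (1 : Fin n) := ⟨by simp [Fin.ext_iff, Nat.mod_eq_of_lt hn]⟩
  exact StStar.conj_S (fun u v hu hv => Units.ext (hφF u v hu hv.1 _)) g ⟨hu, huv⟩ hv

theorem stmt11 (n : ℕ) (hn : 4 ≤ n) [NeZero n] (R : Type) [CommRing R] (I : Ideal R)
    (φ : StStar n R I →* Matrix.GeneralLinearGroup (Fin n) R)
    (hφF : ∀ (u v : Fin n → R) (hu : u ∈ Ecol n R) (hv : ∀ i, v i ∈ I)
      (ho : dotProduct u v = 0),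
      (φ (PresentedGroup.of (StarGen.F u v hu hv ho)) : Matrix (Fin n) (Fin n) R) = tMat u v)
    (hφS : ∀ (u v : Fin n → R) (hu : ∀ i, u i ∈ I) (hv : v ∈ Ecol n R)
      (ho : dotProduct u v = 0),
      (φ (PresentedGroup.of (StarGen.S u v hu hv ho)) : Matrix (Fin n) (Fin n) R) = tMat u v) :
    ∀ (g : StStar n R I) (u v : Fin n → R) (hu : ∀ i, u i ∈ I) (hv : v ∈ Ecol n R)
      (ho : dotProduct u v = 0)
      (hu' : ∀ i, Matrix.mulVec (φ g : Matrix (Fin n) (Fin n) R) u i ∈ I)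
      (hv' : Matrix.mulVec (Matrix.transpose (((φ g)⁻¹ : Matrix.GeneralLinearGroup (Fin n) R) :
        Matrix (Fin n) (Fin n) R)) v ∈ Ecol n R)
      (ho' : dotProduct (Matrix.mulVec (φ g : Matrix (Fin n) (Fin n) R) u)
        (Matrix.mulVec (Matrix.transpose (((φ g)⁻¹ : Matrix.GeneralLinearGroup (Fin n) R) :
          Matrix (Fin n) (Fin n) R)) v) = 0),
      g * PresentedGroup.of (StarGen.S u v hu hv ho) * g⁻¹ =
        PresentedGroup.of (StarGen.S (Matrix.mulVec (φ g : Matrix (Fin n) (Fin n) R) u)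
          (Matrix.mulVec (Matrix.transpose (((φ g)⁻¹ : Matrix.GeneralLinearGroup (Fin n) R) :
            Matrix (Fin n) (Fin n) R)) v) hu' hv' ho') :=
  stmt11_general n (by omega) R I φ hφF
end
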